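/- Let m be a positive integer, n = 4^m + 1, and let g ∈ F_2[X] and h ∈ F_4[X] be monic polynomials with g·h·σ(h) = X^n − 1 in F_4[X]. Let S be the ideal of F_4[X]/(X^n−1) generated by g·h. Then the centraliser of S is exactly the ideal generated by h: an element w = c + ηd of F_4[X]/(X^n−1) (with c, d in the image of F_2[X]) belongs to the ideal generated by h if and only if for every element u = a + ηb of S (with a, b in the image of F_2[X]) the identity a(X)d(X^{−1}) = b(X)c(X^{−1}) holds in F_4[X]/(X^n−1). -/

import Mathlib

open Polynomial

/-- The field with four elements, `F₄ = F₂(η)` with `η² + η + 1 = 0`. -/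
abbrev F4 : Type := GaloisField 2 2

/-- The image in `F₄[X]/(X^n − 1)` of a polynomial with `F₂` coefficients. -/
noncomputable def mk2 (n : ℕ) (q : Polynomial (ZMod 2)) :
    Polynomial F4 ⧸ Ideal.span {(X : Polynomial F4) ^ n - 1} :=
  Ideal.Quotient.mk _ (q.map (algebraMap (ZMod 2) F4))


lemma aux_comp (q : Polynomial (ZMod 2)) (k : ℕ) : q.comp (X ^ (2 ^ k)) = q ^ (2 ^ k) := by
  rw [← Polynomial.expand_eq_comp_X_pow]
  induction k with
  | zero => simp
  | succ k ih =>
    rw [pow_succ, mul_comm, Polynomial.expand_mul, ih, map_pow, ZMod.expand_card, ← pow_mul]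

lemma aux_card (x : F4) : x ^ 4 = x := by
  have : Finite F4 := inferInstance
  let _ : Fintype F4 := Fintype.ofFinite F4
  have hc : Fintype.card F4 = 4 := by
    rw [← Nat.card_eq_fintype_card, GaloisField.card 2 2 (by norm_num)]; norm_num
  have := FiniteField.pow_card x
  rwa [hc] at this

lemma aux_two : (2 : F4) = 0 := CharTwo.two_eq_zero

lemma aux_decomp_elt (η : F4) (hη : η ^ 2 + η + 1 = 0) (x : F4) :
    ∃ s t : ZMod 2, x = algebraMap (ZMod 2) F4 s + η * algebraMap (ZMod 2) F4 t := by
  have h2 := aux_two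
  have h4 := aux_card x
  have : x * (x - 1) * (x - η) * (x - (1 + η)) = 0 := by
    have e : (x - η) * (x - (1 + η)) = x ^ 2 + x + 1 := by
      linear_combination hη - (x * η + x + 1) * h2
    rw [mul_assoc, e]
    linear_combination h4
  rcases mul_eq_zero.1 this with h | h
  · rcases mul_eq_zero.1 h with h | h
    · rcases mul_eq_zero.1 h with h | h
      · exact ⟨0, 0, by simp [h]⟩
      · exact ⟨1, 0, by simp [sub_eq_zero.1 h]⟩
    · exact ⟨0, 1, by simp [sub_eq_zero.1 h]⟩
  · exact ⟨1, 1, by simp [sub_eq_zero.1 h]⟩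

lemma aux_decomp (η : F4) (hη : η ^ 2 + η + 1 = 0) (p : Polynomial F4) :
    ∃ a b : Polynomial (ZMod 2),
      p = a.map (algebraMap (ZMod 2) F4) + C η * b.map (algebraMap (ZMod 2) F4) := by
  induction p using Polynomial.induction_on' with
  | add p q hp hq =>
    obtain ⟨a, b, rfl⟩ := hp
    obtain ⟨a', b', rfl⟩ := hq
    exact ⟨a + a', b + b', by simp only [Polynomial.map_add]; ring⟩
  | monomial k x =>
    obtain ⟨s, t, rfl⟩ := aux_decomp_elt η hη x
    exact ⟨monomial k s, monomial k t, by
      simp only [Polynomial.map_monomial, C_mul_monomial, map_add]⟩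

lemma aux_mem {P f w : Polynomial F4} (hf : f ∣ P) :
    Ideal.Quotient.mk (Ideal.span {P}) w ∈ Ideal.span {Ideal.Quotient.mk (Ideal.span {P}) f} ↔
      f ∣ w := by
  rw [Ideal.mem_span_singleton]
  constructor
  · rintro ⟨k, hk⟩
    obtain ⟨k, rfl⟩ := Ideal.Quotient.mk_surjective k
    rw [← map_mul, Ideal.Quotient.eq, Ideal.mem_span_singleton] at hk
    exact (dvd_sub_left (dvd_mul_right f k)).1 (hf.trans hk)
  · exact fun hd => map_dvd _ hd

lemma aux_frob (a : Polynomial (ZMod 2)) :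
    (a.map (algebraMap (ZMod 2) F4)).map (frobenius F4 2) = a.map (algebraMap (ZMod 2) F4) := by
  rw [Polynomial.map_map]
  congr 1
  exact Subsingleton.elim _ _

lemma aux_eta (η : F4) (m : ℕ) : η ^ 4 ^ m = η := by
  induction m with
  | zero => simp
  | succ k ih => rw [pow_succ, pow_mul, ih, aux_card]

/-- Let `n = 4^m + 1`, let `g ∈ F₂[X]` and `h ∈ F₄[X]` be monic
with `g·h·σ(h) = X^n − 1` over `F₄` (σ the nontrivial automorphism of `F₄`, i.e.
the Frobenius `x ↦ x²`, applied coefficientwise), and let `S` be the ideal of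
`F₄[X]/(X^n−1)` generated by `g·h`.  Then the centraliser of `S` is exactly the
ideal generated by `h`: an element `w = c + ηd` (with `c, d` in the image of
`F₂[X]`) lies in the ideal generated by `h` iff for every `u = a + ηb ∈ S` (with
`a, b` in the image of `F₂[X]`) the identity `a(X)d(X^{−1}) = b(X)c(X^{−1})`
holds in `F₄[X]/(X^n−1)`. -/
theorem stmt_13 (m n : ℕ) (hm : 0 < m) (hn : n = 4 ^ m + 1)
    (η : F4) (hη : η ^ 2 + η + 1 = 0)
    (g : Polynomial (ZMod 2)) (h : Polynomial F4)
    (hg : g.Monic) (hh : h.Monic)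
    (hfact : g.map (algebraMap (ZMod 2) F4) * h * h.map (frobenius F4 2) =
      X ^ n - 1) :
    ∀ c d : Polynomial (ZMod 2),
      (mk2 n c + algebraMap F4 _ η * mk2 n d ∈
          Ideal.span {Ideal.Quotient.mk (Ideal.span {(X : Polynomial F4) ^ n - 1}) h}) ↔
        ∀ a b : Polynomial (ZMod 2),
          mk2 n a + algebraMap F4 _ η * mk2 n b ∈
            Ideal.span {Ideal.Quotient.mk (Ideal.span {(X : Polynomial F4) ^ n - 1})
              (g.map (algebraMap (ZMod 2) F4) * h)} →
          mk2 n (a * d.comp (X ^ (n - 1))) = mk2 n (b * c.comp (X ^ (n - 1))) := by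
  intro c d
  have hN : n - 1 = 2 ^ (2 * m) := by rw [hn, pow_mul]; norm_num
  have hN4 : 2 ^ (2 * m) = 4 ^ m := by rw [pow_mul]; norm_num
  have hmk : ∀ a b : Polynomial (ZMod 2), mk2 n a + algebraMap F4 _ η * mk2 n b =
      Ideal.Quotient.mk (Ideal.span {(X : Polynomial F4) ^ n - 1})
        (a.map (algebraMap (ZMod 2) F4) + C η * b.map (algebraMap (ZMod 2) F4)) := by
    intro a b
    rw [map_add, map_mul]
    rfl
  have hhP : h ∣ X ^ n - 1 := by rw [← hfact]; exact (dvd_mul_left _ _).mul_right _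
  have hghP : g.map (algebraMap (ZMod 2) F4) * h ∣ X ^ n - 1 := by
    rw [← hfact]; exact dvd_mul_right _ _
  simp only [hmk, aux_mem hhP, aux_mem hghP]
  have heq : ∀ a b : Polynomial (ZMod 2),
      mk2 n (a * d.comp (X ^ (n - 1))) = mk2 n (b * c.comp (X ^ (n - 1))) ↔
      (X : Polynomial F4) ^ n - 1 ∣
        a.map (algebraMap (ZMod 2) F4) * d.map (algebraMap (ZMod 2) F4) ^ 4 ^ m -
        b.map (algebraMap (ZMod 2) F4) * c.map (algebraMap (ZMod 2) F4) ^ 4 ^ m := by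
    intro a b
    rw [hN, aux_comp, aux_comp, mk2, mk2, Ideal.Quotient.eq, Ideal.mem_span_singleton, hN4]
    simp only [Polynomial.map_mul, Polynomial.map_pow]
  simp only [heq]
  have hsq : Squarefree h := by
    have hs : ((X : Polynomial F4) ^ n - 1).Separable := by
      rw [Polynomial.X_pow_sub_one_separable_iff, hn]
      have h4 : (4 : F4) = 0 := by linear_combination 2 * aux_two
      simp [h4, hm.ne']
    exact hs.squarefree.squarefree_of_dvd hhP
  have hg0 : g.map (algebraMap (ZMod 2) F4) ≠ 0 := (hg.map _).ne_zero
  have hs0 : h.map (frobenius F4 2) ≠ 0 := (hh.map _).ne_zero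
  have hgτ := aux_frob g
  rw [← hfact]
  have h2 : (2 : Polynomial F4) = 0 := by
    rw [← C_ofNat]; simp [aux_two]
  have hηC : (C η) ^ 2 + C η + 1 = (0 : Polynomial F4) := by
    rw [← C_pow, ← C_add, ← C_1, ← C_add, hη, C_0]
  have hτη : (C η : Polynomial F4).map (frobenius F4 2) = C η ^ 2 := by
    simp [frobenius_def]
  set G := g.map (algebraMap (ZMod 2) F4) with hG
  set τh := h.map (frobenius F4 2) with hτh
  have hWW : (c.map (algebraMap (ZMod 2) F4) + C η * d.map (algebraMap (ZMod 2) F4)) ^ 4 ^ m =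
      c.map (algebraMap (ZMod 2) F4) ^ 4 ^ m + C η * d.map (algebraMap (ZMod 2) F4) ^ 4 ^ m := by
    rw [← hN4, add_pow_char_pow, mul_pow, ← C_pow, hN4, aux_eta]
  have key : h ∣ c.map (algebraMap (ZMod 2) F4) + C η * d.map (algebraMap (ZMod 2) F4) ↔
      h ∣ c.map (algebraMap (ZMod 2) F4) ^ 4 ^ m + C η * d.map (algebraMap (ZMod 2) F4) ^ 4 ^ m := by
    rw [← hWW]
    exact (hsq.dvd_pow_iff_dvd (by positivity)).symm
  rw [key]
  have hcτ : ((c.map (algebraMap (ZMod 2) F4)) ^ 4 ^ m).map (frobenius F4 2) =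
      (c.map (algebraMap (ZMod 2) F4)) ^ 4 ^ m := by rw [Polynomial.map_pow, aux_frob]
  have hdτ : ((d.map (algebraMap (ZMod 2) F4)) ^ 4 ^ m).map (frobenius F4 2) =
      (d.map (algebraMap (ZMod 2) F4)) ^ 4 ^ m := by rw [Polynomial.map_pow, aux_frob]
  generalize (c.map (algebraMap (ZMod 2) F4)) ^ 4 ^ m = c' at *
  generalize (d.map (algebraMap (ZMod 2) F4)) ^ 4 ^ m = d' at *
  have hform : ∀ a b : Polynomial F4, a * d' - b * c' =
      (a + C η * b) * (c' + C η ^ 2 * d') - (a + C η ^ 2 * b) * (c' + C η * d') := by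
    intro a b
    linear_combination (b * c' - a * d') * hηC + (a * d' * (1 + C η) - b * c' * (1 + C η)) * h2
  constructor
  · intro hw a b hu
    have hw' := Polynomial.map_dvd (frobenius F4 2) hw
    have hu' := Polynomial.map_dvd (frobenius F4 2) hu
    simp only [Polynomial.map_add, Polynomial.map_mul, hτη, hcτ, hdτ, hgτ, aux_frob,
      ← hτh] at hw' hu'
    rw [hform]
    refine dvd_sub (mul_dvd_mul hu hw') ?_
    rw [mul_right_comm]
    exact mul_dvd_mul hu' hw
  · intro H
    have H' : ∀ u : Polynomial F4, G * h ∣ u →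
        G * h * τh ∣ u * (c' + C η ^ 2 * d') - u.map (frobenius F4 2) * (c' + C η * d') := by
      intro u hu
      obtain ⟨a, b, rfl⟩ := aux_decomp η hη u
      have := H a b hu
      rw [hform] at this
      simpa only [Polynomial.map_add, Polynomial.map_mul, hτη, aux_frob] using this
    have e1 := H' (G * h) dvd_rfl
    have e2 := H' (C η * (G * h)) (dvd_mul_left _ _)
    simp only [Polynomial.map_mul, hτη, hgτ, ← hτh] at e1 e2
    have e3 := dvd_sub e2 (e1.mul_left (C η))
    have e4 : (G * τh) * h ∣ (G * τh) * (c' + C η * d') := by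
      rw [mul_right_comm]
      convert e3 using 1
      linear_combination (G * τh * (c' + C η * d')) * (hηC - C η * h2)
    exact (mul_dvd_mul_iff_left (mul_ne_zero hg0 hs0)).1 e4
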